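/- Let R be a commutative noetherian ring and φ : Spec R → ℤ_{≥0} a function with φ(p) ≤ depth(R_p) for all primes p. Then there is a hereditary Tor-pair (E, C) generated by a set of R-modules of finite flat dimension (namely by {S_{φ(p)}(pR_p; R_p) : p ∈ Spec R}) such that C = {M : depth_{R_p}(M_p) ≥ φ(p) for all p ∈ Spec R}. Moreover, for every i ≥ 0, C_(i) = {M : depth_{R_p}(M_p) ≥ φ(p) − i for all p ∈ Spec R}; in particular k(p) ∈ C_(i) if and only if φ(p) ≤ i. -/

import Mathlib

open CategoryTheory Opposite

noncomputable section

/-- Vanishing of the `n`-th Ext group of two `R`-modules. -/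
def extV (R : Type) [Ring R] (M N : ModuleCat.{0} R) (n : ℕ) : Prop :=
  Subsingleton (((_root_.Ext ℤ (ModuleCat.{0} R) n).obj (op M)).obj N)

/-- Vanishing of the `n`-th Tor group of two `R`-modules. -/
def torV (R : Type) [CommRing R] (M N : ModuleCat.{0} R) (n : ℕ) : Prop :=
  Subsingleton (((Tor (ModuleCat.{0} R) n).obj M).obj N)

/-- `f : A →ₗ[R] B` is a pure monomorphism. -/
def IsPureMono (R : Type) [CommRing R] {A B : Type} [AddCommGroup A] [Module R A]
    [AddCommGroup B] [Module R B] (f : A →ₗ[R] B) : Prop :=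
  Function.Injective f ∧
    ∀ (Q : Type) [AddCommGroup Q] [Module R Q], Function.Injective (LinearMap.lTensor Q f)

/-- An `R`-module `N` is pure-injective if it is injective with respect to
pure monomorphisms. -/
def PureInjective (R : Type) [CommRing R] (N : Type) [AddCommGroup N] [Module R N] : Prop :=
  ∀ (A B : Type) [AddCommGroup A] [Module R A] [AddCommGroup B] [Module R B]
    (f : A →ₗ[R] B), IsPureMono R f → ∀ g : A →ₗ[R] N, ∃ h : B →ₗ[R] N, h.comp f = g

/-- `N` has injective dimension at most `n`. -/
def injDimLE (R : Type) [Ring R] (N : ModuleCat.{0} R) (n : ℕ) : Prop :=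
  ∀ M : ModuleCat.{0} R, ∀ j : ℕ, n < j → extV R M N j

/-- `M` has projective dimension at most `n`. -/
def projDimLE (R : Type) [Ring R] (M : ModuleCat.{0} R) (n : ℕ) : Prop :=
  ∀ N : ModuleCat.{0} R, ∀ j : ℕ, n < j → extV R M N j

/-- `M` has flat dimension at most `n`. -/
def flatDimLE (R : Type) [CommRing R] (M : ModuleCat.{0} R) (n : ℕ) : Prop :=
  ∀ N : ModuleCat.{0} R, ∀ j : ℕ, n < j → torV R M N j

/-- The depth of a module over a commutative local ring. -/
def rdepth (A : Type) [CommRing A] [IsLocalRing A] (M : Type) [AddCommGroup M]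
    [Module A M] : ℕ∞ :=
  sInf {n : ℕ∞ | ∃ i : ℕ, n = (i : ℕ∞) ∧
    ¬ extV A (ModuleCat.of A (IsLocalRing.ResidueField A)) (ModuleCat.of A M) i}

/-- `depth(R_p)`. -/
def ringDepthAt (R : Type) [CommRing R] (p : PrimeSpectrum R) : ℕ∞ :=
  rdepth (Localization.AtPrime p.asIdeal) (Localization.AtPrime p.asIdeal)

/-- `depth_{R_p}(M_p)`. -/
def depthAt (R : Type) [CommRing R] (p : PrimeSpectrum R) (M : Type) [AddCommGroup M]
    [Module R M] : ℕ∞ :=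
  rdepth (Localization.AtPrime p.asIdeal) (LocalizedModule p.asIdeal.primeCompl M)

/-- `f : M →ₗ[R] E` exhibits `E` as an injective envelope of `M`. -/
def IsInjectiveEnvelope (R : Type) [Ring R] {M E : Type} [AddCommGroup M] [Module R M]
    [AddCommGroup E] [Module R E] (f : M →ₗ[R] E) : Prop :=
  Module.Injective R E ∧ Function.Injective f ∧
    ∀ K : Submodule R E, K ≠ ⊥ → K ⊓ LinearMap.range f ≠ ⊥

/-- The degree-`i` term of the Koszul cochain complex on `ℓ` generators over `A`:
a free module on the `i`-element subsets of `Fin ℓ`. -/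
abbrev KosTerm (A : Type) [CommRing A] (ℓ i : ℕ) : Type :=
  {s : Finset (Fin ℓ) // s.card = i} → A

/-- The Koszul cochain differential (for the sequence `x`), from degree `i`
to degree `i+1`. -/
def kosD (A : Type) [CommRing A] {ℓ : ℕ} (x : Fin ℓ → A) (i : ℕ) :
    KosTerm A ℓ i →ₗ[A] KosTerm A ℓ (i + 1) where
  toFun f T := ∑ t ∈ T.1.attach,
    ((-1 : A) ^ ((T.1.filter (fun s => s < t.1)).card) * x t.1) •
      f ⟨T.1.erase t.1, by
        rw [Finset.card_erase_of_mem t.2, T.2]; omega⟩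
  map_add' f g := by
    funext T
    simp [mul_add, Finset.sum_add_distrib]
  map_smul' a f := by
    funext T
    rw [RingHom.id_apply]
    simp only [Pi.smul_apply, smul_eq_mul, Finset.mul_sum]
    exact Finset.sum_congr rfl fun t _ => by ring

/-- `S_k(x; A)`: the cokernel of the `(k-1)`-st differential of the Koszul cochain
complex of the sequence `x` (with `S_0 = A`). -/
def KosCoker (A : Type) [CommRing A] {ℓ : ℕ} (x : Fin ℓ → A) : ℕ → Type
  | 0 => A
  | m + 1 => KosTerm A ℓ (m + 1) ⧸ LinearMap.range (kosD A x m)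

instance kosCokerAddCommGroup (A : Type) [CommRing A] {ℓ : ℕ} (x : Fin ℓ → A) :
    (k : ℕ) → AddCommGroup (KosCoker A x k)
  | 0 => inferInstanceAs (AddCommGroup A)
  | m + 1 => inferInstanceAs
      (AddCommGroup (KosTerm A ℓ (m + 1) ⧸ LinearMap.range (kosD A x m)))

instance kosCokerModule (A : Type) [CommRing A] {ℓ : ℕ} (x : Fin ℓ → A) :
    (k : ℕ) → Module A (KosCoker A x k)
  | 0 => inferInstanceAs (Module A A)
  | m + 1 => inferInstanceAs
      (Module A (KosTerm A ℓ (m + 1) ⧸ LinearMap.range (kosD A x m)))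

/-- The `R`-module structure on `S_k(x; A)` obtained by restriction of scalars. -/
instance kosCokerModule' (R A : Type) [CommRing R] [CommRing A] [Algebra R A]
    {ℓ : ℕ} (x : Fin ℓ → A) (k : ℕ) : Module R (KosCoker A x k) :=
  Module.compHom _ (algebraMap R A)

/-- The left Tor_1-orthogonal class. -/
def torLeft1 (R : Type) [CommRing R] (𝒳 : Set (ModuleCat.{0} R)) : Set (ModuleCat.{0} R) :=
  {M | ∀ X ∈ 𝒳, torV R M X 1}

/-- The right Tor_1-orthogonal class. -/
def torRight1 (R : Type) [CommRing R] (𝒳 : Set (ModuleCat.{0} R)) : Set (ModuleCat.{0} R) :=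
  {M | ∀ X ∈ 𝒳, torV R X M 1}

/-- A Tor-pair. -/
def IsTorPair (R : Type) [CommRing R] (ℰ 𝒞 : Set (ModuleCat.{0} R)) : Prop :=
  ℰ = torLeft1 R 𝒞 ∧ 𝒞 = torRight1 R ℰ

/-- A hereditary Tor-pair. -/
def IsHereditaryTorPair (R : Type) [CommRing R] (ℰ 𝒞 : Set (ModuleCat.{0} R)) : Prop :=
  IsTorPair R ℰ 𝒞 ∧ ∀ X ∈ ℰ, ∀ Y ∈ 𝒞, ∀ i : ℕ, 1 ≤ i → torV R X Y i

/-- The class `𝒞_(i) = {M ∣ Tor_j(E, M) = 0 for all j > i, E ∈ ℰ}`. -/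
def torShift (R : Type) [CommRing R] (ℰ : Set (ModuleCat.{0} R)) (i : ℕ) :
    Set (ModuleCat.{0} R) :=
  {M | ∀ X ∈ ℰ, ∀ j : ℕ, i < j → torV R X M j}

/-- The residue field `k(p)` of `R_p` as an `R`-module. -/
abbrev resField (R : Type) [CommRing R] (p : PrimeSpectrum R) : Type :=
  LocalizedModule p.asIdeal.primeCompl (R ⧸ p.asIdeal)

/-- The generating set `𝒮_φ = {S_{φ(p)}(pR_p; R_p) ∣ p ∈ Spec R}` (closed under
isomorphism, over all choices of finite generating sets of `pR_p`). -/
def SphiSet (R : Type) [CommRing R] (φ : PrimeSpectrum R → ℕ) : Set (ModuleCat.{0} R) :=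
  {X | ∃ (p : PrimeSpectrum R) (ℓ : ℕ) (x : Fin ℓ → Localization.AtPrime p.asIdeal),
    Ideal.span (Set.range x) =
      Ideal.map (algebraMap R (Localization.AtPrime p.asIdeal)) p.asIdeal ∧
    Nonempty (X ≅ ModuleCat.of R (KosCoker (Localization.AtPrime p.asIdeal) x (φ p)))}

/-!
Let `x` generate the maximal ideal of `A = R_p`, where `depth A ≥ k`. The first `k` steps of the
Koszul cochain complex of `x` form a free resolution of `S_k(x; A)`, and `A` is flat over `R`, so
`Tor_j(S_k(x; A), M)` vanishes for `j > k` and is the Koszul cohomology of `M_p` in degree `k - j`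
for `1 ≤ j ≤ k`. As the depth of `M_p` is the least degree in which its Koszul cohomology is
nonzero, the vanishing of all `Tor_j(S_k(x; A), M)` with `j > i` says that `depth M_p ≥ k - i`.
The vanishing of `Tor_1` alone only concerns the degree `k - 1`; the lower degrees follow by letting
the generating sequence `x` vary.
-/

section Koszul

variable {A : Type*} [CommRing A] {ι : Type*} [LinearOrder ι]

/-- The sign `(-1)^#{s ∈ T | s < t}` of the component `T.erase t → T` of the Koszul cochain
differential. -/
def koszulSign (A : Type*) [CommRing A] (t : ι) (T : Finset ι) : A :=
  (-1) ^ (T.filter (· < t)).card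

theorem koszulSign_mul_self (t : ι) (T : Finset ι) :
    koszulSign A t T * koszulSign A t T = 1 := by
  rw [koszulSign, ← mul_pow, neg_one_mul, neg_neg, one_pow]

theorem koszulSign_erase_of_lt {t u : ι} {T : Finset ι} (hu : u ∈ T) (h : u < t) :
    koszulSign A t (T.erase u) = -koszulSign A t T := by
  have hmem : u ∈ T.filter (· < t) := Finset.mem_filter.2 ⟨hu, h⟩
  rw [koszulSign, koszulSign, Finset.filter_erase, ← Finset.card_erase_add_one hmem, pow_succ,
    mul_neg_one, neg_neg]

theorem koszulSign_erase_of_le {t u : ι} {T : Finset ι} (h : t ≤ u) :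
    koszulSign A t (T.erase u) = koszulSign A t T := by
  rw [koszulSign, koszulSign, Finset.filter_erase, Finset.erase_eq_of_notMem]
  simp [h]

theorem koszulSign_mul_koszulSign_erase {t u : ι} {T : Finset ι} (ht : t ∈ T) (hu : u ∈ T)
    (h : t ≠ u) :
    koszulSign A t T * koszulSign A u (T.erase t) =
      -(koszulSign A u T * koszulSign A t (T.erase u)) := by
  rcases h.lt_or_gt with h | h
  · rw [koszulSign_erase_of_lt ht h, koszulSign_erase_of_le h.le]; ring
  · rw [koszulSign_erase_of_lt hu h, koszulSign_erase_of_le h.le]; ring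

theorem koszulSign_mul_koszulSign {t u : ι} {T : Finset ι} (ht : t ∈ T) (hu : u ∈ T)
    (h : t ≠ u) :
    koszulSign A t T * koszulSign A u T =
      -(koszulSign A u (T.erase t) * koszulSign A t (T.erase u)) := by
  rcases h.lt_or_gt with h | h
  · rw [koszulSign_erase_of_lt ht h, koszulSign_erase_of_le h.le]; ring
  · rw [koszulSign_erase_of_lt hu h, koszulSign_erase_of_le h.le]; ring

variable (x : ι → A) {M E N : Type*} [AddCommGroup M] [Module A M] [AddCommGroup E] [Module A E]
  [AddCommGroup N] [Module A N]

/-- The Koszul cochain differential of the sequence `x` with coefficients in `M`, in all degrees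
at once: a cochain is a function on all finite sets of indices, and its degree `j` part is its
restriction to the sets of cardinality `j`. -/
def koszulDiff (M : Type*) [AddCommGroup M] [Module A M] :
    (Finset ι → M) →ₗ[A] (Finset ι → M) where
  toFun f T := ∑ t ∈ T, (koszulSign A t T * x t) • f (T.erase t)
  map_add' f g := by
    funext T
    simp [Finset.sum_add_distrib]
  map_smul' a f := by
    funext T
    simp only [Pi.smul_apply, RingHom.id_apply, Finset.smul_sum]
    exact Finset.sum_congr rfl fun t _ => smul_comm _ _ _

theorem koszulDiff_apply (f : Finset ι → M) (T : Finset ι) :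
    koszulDiff x M f T = ∑ t ∈ T, (koszulSign A t T * x t) • f (T.erase t) := rfl

theorem koszulDiff_empty (f : Finset ι → M) : koszulDiff x M f ∅ = 0 := by
  rw [koszulDiff_apply, Finset.sum_empty]

theorem koszulDiff_singleton (f : Finset ι → M) (i : ι) :
    koszulDiff x M f {i} = x i • f ∅ := by
  simp [koszulDiff_apply, koszulSign, Finset.filter_singleton]

theorem koszulDiff_congr {f g : Finset ι → M} {j : ℕ} (h : ∀ T, T.card = j → f T = g T)
    {T : Finset ι} (hT : T.card = j + 1) : koszulDiff x M f T = koszulDiff x M g T := by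
  refine Finset.sum_congr rfl fun t ht => ?_
  rw [h (T.erase t) (by rw [Finset.card_erase_of_mem ht, hT, Nat.add_sub_cancel])]

theorem koszulDiff_comp (φ : M →ₗ[A] N) (f : Finset ι → M) (T : Finset ι) :
    koszulDiff x N (φ ∘ f) T = φ (koszulDiff x M f T) := by
  simp [koszulDiff_apply]

theorem koszulDiff_koszulDiff (f : Finset ι → M) : koszulDiff x M (koszulDiff x M f) = 0 := by
  funext T
  simp only [koszulDiff_apply, Finset.smul_sum, smul_smul]
  rw [Finset.sum_sigma']
  refine Finset.sum_involution (fun a _ => ⟨a.2, a.1⟩) ?_ ?_ ?_ fun _ _ => rfl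
  · rintro ⟨t, u⟩ h
    obtain ⟨ht, hut, hu⟩ : t ∈ T ∧ u ≠ t ∧ u ∈ T := by simpa using h
    rw [Finset.erase_right_comm (a := u), ← add_smul]
    convert zero_smul A _
    linear_combination (x t * x u) * koszulSign_mul_koszulSign_erase (A := A) ht hu hut.symm
  · rintro ⟨t, u⟩ h _ heq
    obtain ⟨-, hut, -⟩ : t ∈ T ∧ u ≠ t ∧ u ∈ T := by simpa using h
    exact hut (congrArg Sigma.fst heq)
  · rintro ⟨t, u⟩ h
    obtain ⟨ht, hut, hu⟩ : t ∈ T ∧ u ≠ t ∧ u ∈ T := by simpa using h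
    simpa using ⟨hu, hut.symm, ht⟩

/-- Contraction of Koszul cochains against the `i`-th basis vector; it is a homotopy between
multiplication by `x i` and zero. -/
def koszulContract (A : Type*) [CommRing A] [Module A M] (i : ι) (f : Finset ι → M) :
    Finset ι → M :=
  fun S => if i ∈ S then 0 else koszulSign A i (insert i S) • f (insert i S)

theorem koszulDiff_koszulContract_of_mem {i : ι} {S : Finset ι} (hi : i ∈ S)
    (f : Finset ι → M) : koszulDiff x M (koszulContract A i f) S = x i • f S := by
  rw [koszulDiff_apply, Finset.sum_eq_single_of_mem i hi]
  · simp only [koszulContract, Finset.notMem_erase, if_false, Finset.insert_erase hi, smul_smul]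
    congr 1
    linear_combination (x i) * koszulSign_mul_self (A := A) i S
  · intro t _ hti
    simp [koszulContract, hi, hti.symm]

theorem koszulDiff_koszulContract_of_notMem {i : ι} {S : Finset ι} (hi : i ∉ S)
    {f : Finset ι → M} (hf : koszulDiff x M f (insert i S) = 0) :
    koszulDiff x M (koszulContract A i f) S = x i • f S := by
  have hsolve : x i • f S = -∑ t ∈ S, (koszulSign A i (insert i S) *
      (koszulSign A t (insert i S) * x t)) • f ((insert i S).erase t) := by
    have h := congrArg (koszulSign A i (insert i S) • ·) hf
    simp only [koszulDiff_apply, Finset.sum_insert hi, Finset.erase_insert hi, smul_add,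
      smul_smul, Finset.smul_sum, smul_zero, ← mul_assoc _ _ (x i), koszulSign_mul_self,
      one_mul] at h
    exact eq_neg_of_add_eq_zero_left h
  rw [hsolve, koszulDiff_apply, ← Finset.sum_neg_distrib]
  refine Finset.sum_congr rfl fun t ht => ?_
  have hit : i ≠ t := fun h => hi (h ▸ ht)
  have hsign := koszulSign_mul_koszulSign (A := A) (Finset.mem_insert_self i S)
    (Finset.mem_insert_of_mem ht) hit
  rw [Finset.erase_insert hi, Finset.erase_insert_of_ne hit] at hsign
  rw [koszulContract, if_neg (fun h => hi (Finset.mem_of_mem_erase h)), smul_smul,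
    Finset.erase_insert_of_ne hit, ← neg_smul]
  congr 1
  linear_combination (x t) * hsign

/-- Exactness in degree `j` of the Koszul cochain complex of `x` with coefficients in `M`. -/
def KoszulExact (M : Type*) [AddCommGroup M] [Module A M] (j : ℕ) : Prop :=
  ∀ f : Finset ι → M, (∀ T, T.card = j + 1 → koszulDiff x M f T = 0) →
    ∃ g : Finset ι → M, ∀ T, T.card = j → koszulDiff x M g T = f T

variable {x}

theorem koszulExact_zero_iff :
    KoszulExact x M 0 ↔ ∀ m : M, (∀ i, x i • m = 0) → m = 0 := by
  constructor
  · intro h m hm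
    obtain ⟨g, hg⟩ := h (fun _ => m) fun T hT => by
      obtain ⟨i, rfl⟩ := Finset.card_eq_one.1 hT
      rw [koszulDiff_singleton, hm]
    rw [← hg ∅ rfl, koszulDiff_empty]
  · intro h f hf
    refine ⟨0, fun T hT => ?_⟩
    rw [Finset.card_eq_zero.1 hT, koszulDiff_empty]
    refine (h _ fun i => ?_).symm
    rw [← koszulDiff_singleton, hf {i} rfl]

theorem KoszulExact.of_linearEquiv (e : M ≃ₗ[A] N) {j : ℕ} (h : KoszulExact x M j) :
    KoszulExact x N j := by
  intro f hf
  obtain ⟨g, hg⟩ := h (e.symm ∘ f) fun T hT =>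
    (koszulDiff_comp x e.symm.toLinearMap f T).trans (by rw [hf T hT, map_zero])
  refine ⟨e ∘ g, fun T hT => (koszulDiff_comp x e.toLinearMap g T).trans ?_⟩
  simp [hg T hT]

theorem koszulExact_congr (e : M ≃ₗ[A] N) {j : ℕ} :
    KoszulExact x M j ↔ KoszulExact x N j :=
  ⟨.of_linearEquiv e, .of_linearEquiv e.symm⟩

theorem koszulExact_of_one_mem_smul_top
    (h : (1 : Module.End A E) ∈ Ideal.span (Set.range x) • (⊤ : Submodule A (Module.End A E)))
    (j : ℕ) : KoszulExact x E j := by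
  intro f hf
  suffices key : ∀ e ∈ Ideal.span (Set.range x) • (⊤ : Submodule A (Module.End A E)),
      ∃ g : Finset ι → E, ∀ T, T.card = j → koszulDiff x E g T = e (f T) from key 1 h
  intro e he
  induction he using Submodule.smul_induction_on' with
  | smul a ha e _ =>
    induction ha using Submodule.span_induction with
    | mem a ha =>
      obtain ⟨i, rfl⟩ := ha
      refine ⟨koszulContract A i (e ∘ f), fun T hT => ?_⟩
      by_cases hi : i ∈ T
      · exact koszulDiff_koszulContract_of_mem x hi _
      · refine koszulDiff_koszulContract_of_notMem x hi ?_
        rw [koszulDiff_comp, hf _ (by rw [Finset.card_insert_of_notMem hi, hT]), map_zero]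
    | zero => exact ⟨0, fun T _ => by simp⟩
    | add a b _ _ iha ihb =>
      obtain ⟨⟨g, hg⟩, g', hg'⟩ := And.intro iha ihb
      exact ⟨g + g', fun T hT => by simp [hg T hT, hg' T hT, add_smul]⟩
    | smul b a _ iha =>
      obtain ⟨g, hg⟩ := iha
      exact ⟨b • g, fun T hT => by simp [hg T hT, mul_smul]⟩
  | add e _ _ _ ihe ihe' =>
    obtain ⟨⟨g, hg⟩, g', hg'⟩ := And.intro ihe ihe'
    exact ⟨g + g', fun T hT => by simp [hg T hT, hg' T hT]⟩

section ShortExact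

variable {i : M →ₗ[A] E} {p : E →ₗ[A] N} (hi : Function.Injective i) (hip : Function.Exact i p)
  (hp : Function.Surjective p) {j : ℕ}
include hi hip hp

theorem KoszulExact.succ_of_shortExact (hE : KoszulExact x E (j + 1)) (hN : KoszulExact x N j) :
    KoszulExact x M (j + 1) := by
  intro f hf
  obtain ⟨g, hg⟩ := hE (i ∘ f) fun T hT => by rw [koszulDiff_comp, hf T hT, map_zero]
  obtain ⟨h, hh⟩ := hN (p ∘ g) fun T hT => by
    rw [koszulDiff_comp, hg T hT, Function.comp_apply, hip.apply_apply_eq_zero]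
  obtain ⟨h', rfl : p ∘ h' = h⟩ := hp.comp_left h
  choose! u hu using fun T (hT : T.card = j) => (hip ((g - koszulDiff x E h') T)).1 <| by
    rw [Pi.sub_apply, map_sub, ← koszulDiff_comp, hh T hT,
      Function.comp_apply, sub_self]
  refine ⟨u, fun T hT => hi ?_⟩
  rw [← koszulDiff_comp, koszulDiff_congr x (f := i ∘ u) hu hT, map_sub, koszulDiff_koszulDiff,
    sub_zero, hg T hT, Function.comp_apply]

theorem KoszulExact.of_succ_of_shortExact (hE : KoszulExact x E j)
    (hM : KoszulExact x M (j + 1)) : KoszulExact x N j := by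
  intro f hf
  obtain ⟨f', rfl : p ∘ f' = f⟩ := hp.comp_left f
  choose! u hu using fun T (hT : T.card = j + 1) =>
    (hip _).1 ((koszulDiff_comp x p f' T).symm.trans (hf T hT))
  obtain ⟨v, hv⟩ := hM u fun T hT => hi <| by
    rw [← koszulDiff_comp, koszulDiff_congr x (f := i ∘ u) hu hT, koszulDiff_koszulDiff, map_zero,
      Pi.zero_apply]
  obtain ⟨w, hw⟩ := hE (f' - i ∘ v) fun T hT => by
    rw [map_sub, Pi.sub_apply, koszulDiff_comp, hv T hT, hu T hT, sub_self]
  refine ⟨p ∘ w, fun T hT => ?_⟩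
  rw [koszulDiff_comp, hw T hT, Pi.sub_apply, map_sub, Function.comp_apply,
    hip.apply_apply_eq_zero, sub_zero, Function.comp_apply]

end ShortExact

section Snoc

variable {ℓ : ℕ}

/-- The subset `{last} ∪ S` of `Fin (ℓ + 1)`. -/
def finsetSnoc (S : Finset (Fin ℓ)) : Finset (Fin (ℓ + 1)) :=
  insert (Fin.last ℓ) (S.map Fin.castSuccEmb)

theorem last_notMem_map_castSuccEmb (S : Finset (Fin ℓ)) :
    Fin.last ℓ ∉ S.map Fin.castSuccEmb := by
  simp

theorem castSucc_mem_finsetSnoc {S : Finset (Fin ℓ)} {t : Fin ℓ} :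
    t.castSucc ∈ finsetSnoc S ↔ t ∈ S := by
  simp [finsetSnoc]

theorem card_finsetSnoc (S : Finset (Fin ℓ)) : (finsetSnoc S).card = S.card + 1 := by
  rw [finsetSnoc, Finset.card_insert_of_notMem (last_notMem_map_castSuccEmb S), Finset.card_map]

theorem finsetSnoc_filter_castSucc_mem {T : Finset (Fin (ℓ + 1))} (hT : Fin.last ℓ ∈ T) :
    finsetSnoc (Finset.univ.filter (fun t : Fin ℓ => t.castSucc ∈ T)) = T := by
  ext t
  induction t using Fin.lastCases with
  | last => simp [finsetSnoc, hT]
  | cast t => simp [castSucc_mem_finsetSnoc]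

theorem finsetSnoc_erase (S : Finset (Fin ℓ)) (t : Fin ℓ) :
    (finsetSnoc S).erase t.castSucc = finsetSnoc (S.erase t) := by
  rw [finsetSnoc, Finset.erase_insert_of_ne (Fin.castSucc_ne_last t).symm, finsetSnoc,
    Finset.map_erase, Fin.coe_castSuccEmb]

theorem koszulSign_finsetSnoc (S : Finset (Fin ℓ)) (t : Fin ℓ) :
    koszulSign A t.castSucc (finsetSnoc S) = koszulSign A t S := by
  have hfilter : (finsetSnoc S).filter (· < t.castSucc) =
      (S.filter (· < t)).map Fin.castSuccEmb := by
    ext u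
    induction u using Fin.lastCases with
    | last => simp [Fin.le_last]
    | cast u => simp [castSucc_mem_finsetSnoc]
  rw [koszulSign, hfilter, Finset.card_map, koszulSign]

theorem koszulDiff_snoc_zero_finsetSnoc (x : Fin ℓ → A) (f : Finset (Fin (ℓ + 1)) → M)
    (S : Finset (Fin ℓ)) :
    koszulDiff (Fin.snoc x 0 : Fin (ℓ + 1) → A) M f (finsetSnoc S) =
      koszulDiff x M (f ∘ finsetSnoc) S := by
  rw [koszulDiff_apply, finsetSnoc, Finset.sum_insert (last_notMem_map_castSuccEmb S),
    Finset.sum_map, Fin.snoc_last, mul_zero, zero_smul, zero_add, ← finsetSnoc]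
  simp only [Fin.coe_castSuccEmb, koszulSign_finsetSnoc, Fin.snoc_castSucc, finsetSnoc_erase,
    koszulDiff_apply, Function.comp_apply]

theorem KoszulExact.of_snoc_zero {x : Fin ℓ → A} {j : ℕ}
    (h : KoszulExact (Fin.snoc x 0 : Fin (ℓ + 1) → A) M (j + 1)) : KoszulExact x M j := by
  intro f hf
  let f' : Finset (Fin (ℓ + 1)) → M := fun T =>
    if Fin.last ℓ ∈ T then f (Finset.univ.filter fun t => t.castSucc ∈ T) else 0
  have hf' : f' ∘ finsetSnoc = f := funext fun S => by
    simp [f', finsetSnoc]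
  obtain ⟨g, hg⟩ := h f' fun T hT => by
    by_cases hlast : Fin.last ℓ ∈ T
    · rw [← finsetSnoc_filter_castSucc_mem hlast, card_finsetSnoc] at hT
      rw [← finsetSnoc_filter_castSucc_mem hlast, koszulDiff_snoc_zero_finsetSnoc, hf',
        hf _ (Nat.succ_injective hT)]
    · exact Finset.sum_eq_zero fun t _ => by
        simp only [f', if_neg fun h => hlast (Finset.mem_of_mem_erase h), smul_zero]
  refine ⟨g ∘ finsetSnoc, fun S hS => ?_⟩
  rw [← koszulDiff_snoc_zero_finsetSnoc, hg _ (by rw [card_finsetSnoc, hS]), ← hf',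
    Function.comp_apply]

end Snoc

end Koszul

section Ext

variable {A : Type} [CommRing A]

theorem extV_succ_iff {X : ModuleCat.{0} A} (P : ProjectiveResolution X) (Y : ModuleCat.{0} A)
    (n : ℕ) :
    extV A X Y (n + 1) ↔ ∀ f : P.complex.X (n + 1) ⟶ Y, P.complex.d (n + 2) (n + 1) ≫ f = 0 →
      ∃ g : P.complex.X n ⟶ Y, P.complex.d (n + 1) n ≫ g = f := by
  rw [extV, ← ModuleCat.isZero_iff_subsingleton, (P.isoExt (R := ℤ) (n + 1) Y).isZero_iff,
    ← HomologicalComplex.exactAt_iff_isZero_homology,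
    HomologicalComplex.exactAt_iff' _ n (n + 1) (n + 2) (by simp) (by simp),
    ShortComplex.moduleCat_exact_iff]
  rfl

theorem extV_zero_iff {X Y : ModuleCat.{0} A} : extV A X Y 0 ↔ ∀ f : X ⟶ Y, f = 0 := by
  let P := projectiveResolution X
  rw [extV, ← ModuleCat.isZero_iff_subsingleton, (P.isoExt (R := ℤ) 0 Y).isZero_iff,
    ← HomologicalComplex.exactAt_iff_isZero_homology,
    HomologicalComplex.exactAt_iff' _ 0 0 1 (by simp) (by simp),
    ShortComplex.moduleCat_exact_iff]
  have hshape : P.complex.d 0 0 = 0 := P.complex.shape 0 0 (by simp)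
  change (∀ f : P.complex.X 0 ⟶ Y, P.complex.d 1 0 ≫ f = 0 →
    ∃ g : P.complex.X 0 ⟶ Y, P.complex.d 0 0 ≫ g = f) ↔ _
  simp only [hshape, Limits.zero_comp, exists_const]
  let π : P.complex.X 0 ⟶ X := P.π.f 0
  have hπ : P.complex.d 1 0 ≫ π = 0 := P.complex_d_comp_π_f_zero
  have : Epi π := inferInstanceAs (Epi (P.π.f 0))
  constructor
  · intro h f
    rw [← cancel_epi π, Limits.comp_zero]
    exact (h (π ≫ f) (by rw [← Category.assoc, hπ, Limits.zero_comp])).symm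
  · intro h f hf
    obtain ⟨g, rfl⟩ : ∃ g : X ⟶ Y, π ≫ g = f := ⟨P.exact₀.desc f hf, P.exact₀.g_desc f hf⟩
    rw [h g, Limits.comp_zero]

theorem extV_iff_subsingleton_ext (X Y : ModuleCat.{0} A) (n : ℕ) :
    extV A X Y n ↔ Subsingleton (Abelian.Ext X Y n) := by
  cases n with
  | zero =>
    rw [extV_zero_iff, Abelian.Ext.homEquiv₀.subsingleton_congr]
    exact ⟨fun h => ⟨fun f g => (h f).trans (h g).symm⟩, fun _ _ => Subsingleton.elim _ _⟩
  | succ n =>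
    let P := projectiveResolution X
    rw [extV_succ_iff P]
    constructor
    · refine fun h => subsingleton_of_forall_eq 0 fun e => ?_
      obtain ⟨f, hf, rfl⟩ := P.extMk_surjective e (n + 2) rfl
      exact (P.extMk_eq_zero_iff f _ rfl hf n rfl).2 (h f hf)
    · exact fun h f hf => (P.extMk_eq_zero_iff f _ rfl hf n rfl).1 (Subsingleton.elim _ _)

theorem extV_of_one_mem_smul_top {I : Ideal A} {X Y : ModuleCat.{0} A}
    (hX : ∀ a ∈ I, ∀ z : X, a • z = 0)
    (hY : (1 : Module.End A Y) ∈ I • (⊤ : Submodule A (Module.End A Y))) (n : ℕ) :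
    extV A X Y n := by
  rw [extV_iff_subsingleton_ext]
  suffices key : ∀ e ∈ I • (⊤ : Submodule A (Module.End A Y)), ∀ α : Abelian.Ext X Y n,
      α.comp (.mk₀ (ModuleCat.ofHom e)) (add_zero n) = 0 from
    subsingleton_of_forall_eq 0 fun α => (α.comp_mk₀_id).symm.trans (key 1 hY α)
  intro e he α
  induction he using Submodule.smul_induction_on' with
  | smul a ha e _ =>
    have hid : a • 𝟙 X = 0 := ModuleCat.hom_ext (LinearMap.ext (hX a ha))
    have hα : a • α = 0 := by
      rw [← α.mk₀_id_comp, ← Abelian.Ext.smul_comp, ← Abelian.Ext.mk₀_smul, hid,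
        Abelian.Ext.mk₀_zero, Abelian.Ext.zero_comp]
    rw [show ModuleCat.ofHom (a • e) = a • ModuleCat.ofHom e from rfl, Abelian.Ext.mk₀_smul,
      Abelian.Ext.comp_smul, ← Abelian.Ext.smul_comp, hα, Abelian.Ext.zero_comp]
  | add e e' _ _ ihe ihe' =>
    rw [ModuleCat.ofHom_add, Abelian.Ext.mk₀_add, Abelian.Ext.comp_add, ihe, ihe', add_zero]

theorem extV_succ_iff_of_shortExact {X M E N : ModuleCat.{0} A} {i : M →ₗ[A] E} {p : E →ₗ[A] N}
    (hi : Function.Injective i) (hip : Function.Exact i p) (hp : Function.Surjective p)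
    (hE : ∀ n, extV A X E n) (n : ℕ) : extV A X M (n + 1) ↔ extV A X N n := by
  simp only [extV_iff_subsingleton_ext] at hE ⊢
  have hS : (ShortComplex.moduleCatMk i p hip.linearMap_comp_eq_zero).ShortExact :=
    { exact := (ShortComplex.ShortExact.moduleCat_exact_iff_function_exact _).2 hip
      mono_f := (ModuleCat.mono_iff_injective _).2 hi
      epi_g := (ModuleCat.epi_iff_surjective _).2 hp }
  constructor <;> refine fun h => subsingleton_of_forall_eq 0 fun α => ?_
  · obtain ⟨β, rfl⟩ := Abelian.Ext.covariant_sequence_exact₃ X hS α rfl (h.elim _ _)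
    rw [show β = 0 from (hE n).elim _ _, Abelian.Ext.zero_comp]
    rfl
  · obtain ⟨β, rfl⟩ := Abelian.Ext.covariant_sequence_exact₁ X hS α ((hE _).elim _ _) rfl
    rw [show β = 0 from h.elim _ _, Abelian.Ext.zero_comp]
    rfl

theorem smul_quotient_eq_zero {I : Ideal A} (a : A) (ha : a ∈ I) (z : A ⧸ I) : a • z = 0 := by
  obtain ⟨b, rfl⟩ := Ideal.Quotient.mk_surjective z
  exact Ideal.Quotient.eq_zero_iff_mem.2 (I.mul_mem_right b ha)

theorem extV_quotient_zero_iff {I : Ideal A} {M : ModuleCat.{0} A} :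
    extV A (ModuleCat.of A (A ⧸ I)) M 0 ↔ ∀ m : M, (∀ a ∈ I, a • m = 0) → m = 0 := by
  rw [extV_zero_iff]
  constructor
  · intro h m hm
    let f : (A ⧸ I) →ₗ[A] M := I.liftQ (LinearMap.toSpanSingleton A M m) hm
    have hf : f = 0 := congrArg ModuleCat.Hom.hom (h (ModuleCat.ofHom f))
    have hf1 : (1 : A) • m = 0 := LinearMap.congr_fun hf (Submodule.Quotient.mk 1)
    rwa [one_smul] at hf1
  · refine fun h f => ModuleCat.hom_ext (LinearMap.ext fun z => h _ fun a ha => ?_)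
    rw [← map_smul, smul_quotient_eq_zero a ha, map_zero]

end Ext

section Grade

variable {A : Type*} [CommRing A] {ι : Type*} {x : ι → A} {M : Type*} [AddCommGroup M] [Module A M]

theorem forall_mem_span_range_smul_eq_zero_iff {m : M} :
    (∀ a ∈ Ideal.span (Set.range x), a • m = 0) ↔ ∀ i, x i • m = 0 := by
  change Ideal.span (Set.range x) ≤ LinearMap.ker (LinearMap.toSpanSingleton A M m) ↔ _
  rw [Ideal.span_le, Set.range_subset_iff]
  rfl

variable [Finite ι]

theorem eq_zero_of_forall_pow_smul_eq_zero (h : ∀ m : M, (∀ i, x i • m = 0) → m = 0) {m : M}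
    (hm : ∀ i, ∃ n : ℕ, x i ^ n • m = 0) : m = 0 := by
  let I : Ideal A := LinearMap.ker (LinearMap.toSpanSingleton A M m)
  have hmem : ∀ a, a ∈ I ↔ a • m = 0 := fun _ => Iff.rfl
  have hle : Ideal.span (Set.range x) ≤ I.radical := by
    rw [Ideal.span_le, Set.range_subset_iff]
    exact hm
  obtain ⟨n, hn⟩ := Ideal.exists_pow_le_of_le_radical_of_fg hle
    (Submodule.fg_span (Set.finite_range x))
  induction n with
  | zero =>
    rw [← one_smul A m, ← hmem]
    exact hn (by simp)
  | succ n ih =>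
    refine ih fun y hy => (hmem y).2 (h _ fun i => ?_)
    rw [smul_smul, ← hmem]
    rw [pow_succ'] at hn
    exact hn (Ideal.mul_mem_mul (Ideal.subset_span ⟨i, rfl⟩) hy)

theorem injective_pi_localizedModule_powers (h : ∀ m : M, (∀ i, x i • m = 0) → m = 0) :
    Function.Injective (LinearMap.pi fun i =>
      LocalizedModule.mkLinearMap (Submonoid.powers (x i)) M) := by
  refine (injective_iff_map_eq_zero _).2 fun m hm =>
    eq_zero_of_forall_pow_smul_eq_zero h fun i => ?_
  obtain ⟨⟨_, n, rfl⟩, hn⟩ := (IsLocalizedModule.eq_zero_iff (Submonoid.powers (x i))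
    (LocalizedModule.mkLinearMap (Submonoid.powers (x i)) M)).1 (congrFun hm i)
  exact ⟨n, hn⟩

theorem one_mem_span_smul_top_of_bijective {F : ι → Type*} [∀ i, AddCommGroup (F i)]
    [∀ i, Module A (F i)] (h : ∀ i, Function.Bijective (LinearMap.lsmul A (F i) (x i))) :
    (1 : Module.End A (∀ i, F i)) ∈
      Ideal.span (Set.range x) • (⊤ : Submodule A (Module.End A (∀ i, F i))) := by
  classical
  have := Fintype.ofFinite ι
  let e i : F i ≃ₗ[A] F i := LinearEquiv.ofBijective _ (h i)
  have hsum : (1 : Module.End A (∀ i, F i)) = ∑ i, x i •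
      (LinearMap.single A F i ∘ₗ (e i).symm.toLinearMap ∘ₗ LinearMap.proj i) := by
    refine LinearMap.ext fun f => ?_
    have he : ∀ i, x i • (e i).symm (f i) = f i := fun i => (e i).apply_symm_apply (f i)
    simp [LinearMap.sum_apply, ← Pi.single_smul, he, Finset.univ_sum_single]
  rw [hsum]
  exact Submodule.sum_mem _ fun i _ =>
    Submodule.smul_mem_smul (Ideal.subset_span ⟨i, rfl⟩) Submodule.mem_top

end Grade

section Depth

variable {A : Type} [CommRing A] {ι : Type} [Finite ι] [LinearOrder ι] {x : ι → A}

-- Both conditions in degree `0` say that `M` embeds into the product of the localizations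
-- `M_{x i}`. Both theories vanish on it, so passing to the cokernel shifts both down by one degree.
theorem forall_lt_extV_quotient_iff (n : ℕ) (M : ModuleCat.{0} A) :
    (∀ j < n, extV A (ModuleCat.of A (A ⧸ Ideal.span (Set.range x))) M j) ↔
      ∀ j < n, KoszulExact x M j := by
  induction n generalizing M with
  | zero => simp
  | succ n ih =>
    have hzero : extV A (ModuleCat.of A (A ⧸ Ideal.span (Set.range x))) M 0 ↔
        KoszulExact x M 0 := by
      simp_rw [extV_quotient_zero_iff, koszulExact_zero_iff,
        forall_mem_span_range_smul_eq_zero_iff]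
    rw [Nat.forall_lt_succ_left, Nat.forall_lt_succ_left, hzero]
    refine and_congr_right fun h0 => ?_
    let F i := LocalizedModule (Submonoid.powers (x i)) M
    let loc : M →ₗ[A] ∀ i, F i := LinearMap.pi fun i => LocalizedModule.mkLinearMap _ M
    have hloc : Function.Injective loc :=
      injective_pi_localizedModule_powers (koszulExact_zero_iff.1 h0)
    have hone : (1 : Module.End A (∀ i, F i)) ∈ Ideal.span (Set.range x) • ⊤ :=
      one_mem_span_smul_top_of_bijective fun i => (Module.End.isUnit_iff _).1 <|
        IsLocalizedModule.map_units (LocalizedModule.mkLinearMap (Submonoid.powers (x i)) M)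
          ⟨x i, Submonoid.mem_powers _⟩
    have hexact := LinearMap.exact_map_mkQ_range loc
    have hmkQ := (LinearMap.range loc).mkQ_surjective
    have hext (j : ℕ) := extV_succ_iff_of_shortExact
      (X := .of A (A ⧸ Ideal.span (Set.range x))) (E := .of A (∀ i, F i)) (N := .of A _)
      hloc hexact hmkQ (extV_of_one_mem_smul_top smul_quotient_eq_zero hone) j
    have hkos (j : ℕ) : KoszulExact x M (j + 1) ↔ KoszulExact x (_ ⧸ LinearMap.range loc) j :=
      ⟨.of_succ_of_shortExact hloc hexact hmkQ (koszulExact_of_one_mem_smul_top hone j),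
        .succ_of_shortExact hloc hexact hmkQ (koszulExact_of_one_mem_smul_top hone (j + 1))⟩
    simp_rw [hext, hkos]
    exact ih _

theorem natCast_le_rdepth_iff [IsLocalRing A] {M : Type} [AddCommGroup M] [Module A M] {n : ℕ} :
    (n : ℕ∞) ≤ rdepth A M ↔ ∀ j < n,
      extV A (ModuleCat.of A (IsLocalRing.ResidueField A)) (ModuleCat.of A M) j := by
  rw [rdepth, le_sInf_iff]
  constructor
  · refine fun h j hj => by_contra fun hext => ?_
    exact (Nat.cast_le.1 (h j ⟨j, rfl, hext⟩)).not_gt hj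
  · rintro h _ ⟨i, rfl, hext⟩
    exact Nat.cast_le.2 (not_lt.1 fun hi => hext (h i hi))

theorem natCast_le_rdepth_iff_koszulExact [IsLocalRing A]
    (hx : Ideal.span (Set.range x) = IsLocalRing.maximalIdeal A) {M : Type} [AddCommGroup M]
    [Module A M] {n : ℕ} :
    (n : ℕ∞) ≤ rdepth A M ↔ ∀ j < n, KoszulExact x M j := by
  rw [natCast_le_rdepth_iff, ← forall_lt_extV_quotient_iff n (ModuleCat.of A M), hx]
  rfl

end Depth

section Tor

-- The diagram chase of the connecting homomorphism for the rows `Aᵢ → Bᵢ → Cᵢ`, the complex `B`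
-- in the middle being exact.
theorem exact_iff_exact_comp {R : Type*} [CommRing R] {A₁ A₂ B₀ B₁ B₂ B₃ C₁ C₂ C₃ : Type*}
    [AddCommGroup A₁] [Module R A₁] [AddCommGroup A₂] [Module R A₂] [AddCommGroup B₀] [Module R B₀]
    [AddCommGroup B₁] [Module R B₁] [AddCommGroup B₂] [Module R B₂] [AddCommGroup B₃] [Module R B₃]
    [AddCommGroup C₁] [Module R C₁] [AddCommGroup C₂] [Module R C₂] [AddCommGroup C₃] [Module R C₃]
    {a : A₂ →ₗ[R] A₁} {b₁ : B₁ →ₗ[R] B₀} {b₂ : B₂ →ₗ[R] B₁} {b₃ : B₃ →ₗ[R] B₂}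
    {c₂ : C₂ →ₗ[R] C₁} {c₃ : C₃ →ₗ[R] C₂} {i₁ : A₁ →ₗ[R] B₁} {i₂ : A₂ →ₗ[R] B₂}
    {p₁ : B₁ →ₗ[R] C₁} {p₂ : B₂ →ₗ[R] C₂} {p₃ : B₃ →ₗ[R] C₃}
    (hi₁ : Function.Injective i₁) (hip₁ : Function.Exact i₁ p₁) (hip₂ : Function.Exact i₂ p₂)
    (hp₂ : Function.Surjective p₂) (hp₃ : Function.Surjective p₃)
    (hia : i₁ ∘ₗ a = b₂ ∘ₗ i₂) (hpb₂ : p₁ ∘ₗ b₂ = c₂ ∘ₗ p₂) (hpb₃ : p₂ ∘ₗ b₃ = c₃ ∘ₗ p₃)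
    (hb₂₁ : Function.Exact b₂ b₁) (hb₃₂ : Function.Exact b₃ b₂) :
    Function.Exact c₃ c₂ ↔ Function.Exact a (b₁ ∘ₗ i₁) := by
  replace hia := LinearMap.congr_fun hia
  replace hpb₂ := LinearMap.congr_fun hpb₂
  replace hpb₃ := LinearMap.congr_fun hpb₃
  simp only [LinearMap.comp_apply] at hia hpb₂ hpb₃
  constructor
  · refine fun h x => ⟨fun hx => ?_, ?_⟩
    · obtain ⟨y, hy⟩ := (hb₂₁ (i₁ x)).1 hx
      obtain ⟨w, hw⟩ := (h (p₂ y)).1 (by rw [← hpb₂, hy, hip₁.apply_apply_eq_zero])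
      obtain ⟨v, rfl⟩ := hp₃ w
      obtain ⟨z, hz⟩ := (hip₂ (y - b₃ v)).1 (by rw [map_sub, hpb₃, hw, sub_self])
      exact ⟨z, hi₁ (by rw [hia, hz, map_sub, hy, hb₃₂.apply_apply_eq_zero, sub_zero])⟩
    · rintro ⟨z, rfl⟩
      rw [LinearMap.comp_apply, hia, hb₂₁.apply_apply_eq_zero]
  · refine fun h w => ⟨fun hw => ?_, ?_⟩
    · obtain ⟨y, rfl⟩ := hp₂ w
      obtain ⟨x, hx⟩ := (hip₁ (b₂ y)).1 (by rw [hpb₂, hw])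
      obtain ⟨z, hz⟩ := (h x).1 (by rw [LinearMap.comp_apply, hx, hb₂₁.apply_apply_eq_zero])
      obtain ⟨v, hv⟩ := (hb₃₂ (y - i₂ z)).1 (by rw [map_sub, ← hia, hz, hx, sub_self])
      exact ⟨p₃ v, by rw [← hpb₃, hv, map_sub, hip₂.apply_apply_eq_zero, sub_zero]⟩
    · rintro ⟨v, rfl⟩
      obtain ⟨v, rfl⟩ := hp₃ v
      rw [← hpb₃, ← hpb₂, hb₃₂.apply_apply_eq_zero, map_zero]

theorem exact_comp_iff_injective {R : Type*} [CommRing R] {A₀ A₁ A₂ B : Type*} [AddCommGroup A₀]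
    [Module R A₀] [AddCommGroup A₁] [Module R A₁] [AddCommGroup A₂] [Module R A₂] [AddCommGroup B]
    [Module R B] {a₂ : A₂ →ₗ[R] A₁} {a₁ : A₁ →ₗ[R] A₀} {i : A₀ →ₗ[R] B}
    (ha : Function.Exact a₂ a₁) (ha₁ : Function.Surjective a₁) :
    Function.Exact a₂ (i ∘ₗ a₁) ↔ Function.Injective i := by
  refine ⟨fun h => (injective_iff_map_eq_zero i).2 fun z hz => ?_,
    fun hi => (hi.comp_exact_iff_exact).2 ha⟩
  obtain ⟨y, rfl⟩ := ha₁ z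
  exact (ha y).2 ((h y).1 hz)

theorem rTensor_comp_lTensor_comm {R M N P Q : Type*} [CommRing R] [AddCommGroup M] [Module R M]
    [AddCommGroup N] [Module R N] [AddCommGroup P] [Module R P] [AddCommGroup Q] [Module R Q]
    (f : M →ₗ[R] N) (g : P →ₗ[R] Q) :
    f.rTensor Q ∘ₗ g.lTensor M = g.lTensor N ∘ₗ f.rTensor P := by
  rw [LinearMap.rTensor_comp_lTensor, LinearMap.lTensor_comp_rTensor]

variable {R : Type} [CommRing R]

theorem torV_succ_iff (X : ModuleCat.{0} R) {M : ModuleCat.{0} R} (P : ProjectiveResolution M)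
    (j : ℕ) :
    torV R X M (j + 1) ↔ Function.Exact ((P.complex.d (j + 2) (j + 1)).hom.lTensor X)
      ((P.complex.d (j + 1) j).hom.lTensor X) := by
  rw [torV, ← ModuleCat.isZero_iff_subsingleton]
  refine (P.isoLeftDerivedObj ((MonoidalCategory.tensoringLeft _).obj X) _).isZero_iff.trans ?_
  refine (HomologicalComplex.exactAt_iff_isZero_homology _ _).symm.trans ?_
  rw [HomologicalComplex.exactAt_iff' _ (j + 2) (j + 1) j (by simp) (by simp),
    ShortComplex.ShortExact.moduleCat_exact_iff_function_exact]
  rfl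

theorem exact_resolution_d {M : ModuleCat.{0} R} (P : ProjectiveResolution M) (j : ℕ) :
    Function.Exact (P.complex.d (j + 2) (j + 1)).hom (P.complex.d (j + 1) j).hom :=
  (ShortComplex.ShortExact.moduleCat_exact_iff_function_exact _).1 (P.exact_succ j)

theorem exists_exact_resolution_d_zero {M : ModuleCat.{0} R} (P : ProjectiveResolution M) :
    ∃ π : P.complex.X 0 →ₗ[R] M,
      Function.Exact (P.complex.d 1 0).hom π ∧ Function.Surjective π :=
  ⟨(P.π.f 0).hom, (ShortComplex.ShortExact.moduleCat_exact_iff_function_exact _).1 P.exact₀,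
    (ModuleCat.epi_iff_surjective (P.π.f 0)).1 inferInstance⟩

theorem flat_resolution_X {M : ModuleCat.{0} R} (P : ProjectiveResolution M) (j : ℕ) :
    Module.Flat R (P.complex.X j) :=
  have := (IsProjective.iff_projective (R := R) (P.complex.X j)).2 (P.projective j)
  inferInstance

theorem torV_of_flat (X : ModuleCat.{0} R) [Module.Flat R X] (M : ModuleCat.{0} R) (j : ℕ) :
    torV R X M (j + 1) :=
  (torV_succ_iff X (projectiveResolution M) j).2
    (Module.Flat.lTensor_exact X (exact_resolution_d _ _))

theorem torV_congr {X Y : ModuleCat.{0} R} (e : X ≅ Y) (M : ModuleCat.{0} R) (j : ℕ) :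
    torV R X M j ↔ torV R Y M j :=
  (((Tor (ModuleCat.{0} R) j).mapIso e).app M).toLinearEquiv.toEquiv.subsingleton_congr

section ShortExact

variable {X' F X : ModuleCat.{0} R} {i : X' →ₗ[R] F} {p : F →ₗ[R] X} [Module.Flat R F]
  (hi : Function.Injective i) (hip : Function.Exact i p) (hp : Function.Surjective p)
include hi hip hp

theorem torV_add_two_iff (M : ModuleCat.{0} R) (j : ℕ) :
    torV R X M (j + 2) ↔ torV R X' M (j + 1) := by
  let P := projectiveResolution M
  have := flat_resolution_X P
  have hij j : Function.Injective (i.rTensor (P.complex.X j)) :=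
    Module.Flat.rTensor_preserves_injective_linearMap i hi
  rw [torV_succ_iff X P, torV_succ_iff X' P, exact_iff_exact_comp (hij (j + 1))
    (rTensor_exact _ hip hp) (rTensor_exact _ hip hp) (LinearMap.rTensor_surjective _ hp)
    (LinearMap.rTensor_surjective _ hp) (rTensor_comp_lTensor_comm _ _)
    (rTensor_comp_lTensor_comm _ _) (rTensor_comp_lTensor_comm _ _)
    (Module.Flat.lTensor_exact F (exact_resolution_d P j))
    (Module.Flat.lTensor_exact F (exact_resolution_d P (j + 1))),
    ← rTensor_comp_lTensor_comm, (hij j).comp_exact_iff_exact]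

theorem torV_one_iff_rTensor (M : ModuleCat.{0} R) :
    torV R X M 1 ↔ Function.Injective (i.rTensor M) := by
  let P := projectiveResolution M
  have := flat_resolution_X P
  obtain ⟨π, hdπ, hπ⟩ := exists_exact_resolution_d_zero P
  rw [torV_succ_iff X P, exact_iff_exact_comp
    (Module.Flat.rTensor_preserves_injective_linearMap i hi)
    (rTensor_exact _ hip hp) (rTensor_exact _ hip hp) (LinearMap.rTensor_surjective _ hp)
    (LinearMap.rTensor_surjective _ hp) (rTensor_comp_lTensor_comm _ _)
    (rTensor_comp_lTensor_comm _ _) (rTensor_comp_lTensor_comm _ _)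
    (lTensor_exact F hdπ hπ) (Module.Flat.lTensor_exact F (exact_resolution_d P 0)),
    ← rTensor_comp_lTensor_comm]
  exact exact_comp_iff_injective (lTensor_exact X' hdπ hπ) (LinearMap.lTensor_surjective X' hπ)

end ShortExact

theorem exists_flat_surjective (X : ModuleCat.{0} R) :
    ∃ (F : ModuleCat.{0} R) (p : F →ₗ[R] X), Module.Flat R F ∧ Function.Surjective p :=
  ⟨ModuleCat.of R (X →₀ R), Finsupp.linearCombination R id,
    inferInstanceAs (Module.Flat R (X →₀ R)), Finsupp.linearCombination_id_surjective R X⟩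

section ShortExact

variable {K Q M : ModuleCat.{0} R} {i : K →ₗ[R] Q} {p : Q →ₗ[R] M} [Module.Flat R Q]
  (hi : Function.Injective i) (hip : Function.Exact i p) (hp : Function.Surjective p)
include hi hip hp

theorem torV_one_iff_lTensor (X : ModuleCat.{0} R) :
    torV R X M 1 ↔ Function.Injective (i.lTensor X) := by
  obtain ⟨F, q, _, hq⟩ := exists_flat_surjective X
  have hk := q.exact_subtype_ker_map
  have hkQ : Function.Injective ((LinearMap.ker q).subtype.rTensor Q) :=
    Module.Flat.rTensor_preserves_injective_linearMap _ Subtype.val_injective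
  have hiF : Function.Injective (i.lTensor F) :=
    Module.Flat.lTensor_preserves_injective_linearMap i hi
  rw [torV_one_iff_rTensor (X' := .of R (LinearMap.ker q)) Subtype.val_injective hk hq,
    ← LinearMap.exact_zero_iff_injective PUnit (i.lTensor X),
    exact_iff_exact_comp (p₃ := (0 : PUnit →ₗ[R] PUnit)) (b₃ := 0) hkQ (rTensor_exact _ hk hq)
    (rTensor_exact _ hk hq) (LinearMap.rTensor_surjective _ hq)
    (Function.surjective_to_subsingleton _) (rTensor_comp_lTensor_comm _ _)
    (rTensor_comp_lTensor_comm _ _) (by rw [LinearMap.comp_zero, LinearMap.comp_zero])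
    (lTensor_exact F hip hp) ((LinearMap.exact_zero_iff_injective _ _).2 hiF),
    ← rTensor_comp_lTensor_comm]
  exact (exact_comp_iff_injective (lTensor_exact _ hip hp) (LinearMap.lTensor_surjective _ hp)).symm

theorem torV_add_two_iff_right (X : ModuleCat.{0} R) (j : ℕ) :
    torV R X M (j + 2) ↔ torV R X K (j + 1) := by
  induction j generalizing X with
  | zero =>
    obtain ⟨F, q, _, hq⟩ := exists_flat_surjective X
    have hk := q.exact_subtype_ker_map
    have hkQ : Function.Injective ((LinearMap.ker q).subtype.rTensor Q) :=
      Module.Flat.rTensor_preserves_injective_linearMap _ Subtype.val_injective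
    have hiF : Function.Injective (i.lTensor F) :=
      Module.Flat.lTensor_preserves_injective_linearMap i hi
    rw [torV_add_two_iff (X' := .of R (LinearMap.ker q)) Subtype.val_injective hk hq,
      torV_one_iff_lTensor hi hip hp,
      torV_one_iff_rTensor (X' := .of R (LinearMap.ker q)) Subtype.val_injective hk hq,
      ← hkQ.of_comp_iff, ← hiF.of_comp_iff, ← LinearMap.coe_comp, ← LinearMap.coe_comp,
      rTensor_comp_lTensor_comm]
  | succ j ih =>
    obtain ⟨F, q, _, hq⟩ := exists_flat_surjective X
    have hk := q.exact_subtype_ker_map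
    rw [torV_add_two_iff (X' := .of R (LinearMap.ker q)) Subtype.val_injective hk hq, ih,
      torV_add_two_iff (X' := .of R (LinearMap.ker q)) Subtype.val_injective hk hq]

end ShortExact

theorem exists_torV_add_iff (M : ModuleCat.{0} R) (n : ℕ) :
    ∃ K : ModuleCat.{0} R, ∀ (X : ModuleCat.{0} R) (j : ℕ),
      torV R X M (j + 1 + n) ↔ torV R X K (j + 1) := by
  induction n with
  | zero => exact ⟨M, fun _ _ => Iff.rfl⟩
  | succ n ih =>
    obtain ⟨L, hL⟩ := ih
    obtain ⟨Q, p, _, hp⟩ := exists_flat_surjective L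
    refine ⟨.of R (LinearMap.ker p), fun X j => ?_⟩
    rw [← torV_add_two_iff_right (K := .of R (LinearMap.ker p)) Subtype.val_injective
      p.exact_subtype_ker_map hp, ← hL, show j + 1 + (n + 1) = j + 1 + 1 + n by ring]

end Tor

section TorPair

variable {R : Type} [CommRing R]

theorem isTorPair_torLeft1_torRight1 (𝒮 : Set (ModuleCat.{0} R)) :
    IsTorPair R (torLeft1 R (torRight1 R 𝒮)) (torRight1 R 𝒮) :=
  ⟨rfl, Set.Subset.antisymm (fun M hM _ hX => hX M hM)
    fun _ hM X hX => hM X fun _ hN => hN X hX⟩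

-- Dimension shifting in the second variable turns `Tor_j(-, M)` into `Tor_1(-, K)` simultaneously
-- on the generators and on the class they generate.
theorem mem_torShift_torLeft1_torRight1_iff {𝒮 : Set (ModuleCat.{0} R)} {i : ℕ}
    {M : ModuleCat.{0} R} :
    M ∈ torShift R (torLeft1 R (torRight1 R 𝒮)) i ↔ ∀ X ∈ 𝒮, ∀ j, i < j → torV R X M j := by
  refine ⟨fun h X hX => h X fun N hN => hN X hX, fun h X hX j hj => ?_⟩
  obtain ⟨n, rfl⟩ : ∃ n, j = 0 + 1 + n := Nat.exists_eq_add_of_le (by lia)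
  obtain ⟨K, hK⟩ := exists_torV_add_iff M n
  exact (hK X 0).2 (hX K fun Y hY => (hK Y 0).1 (h Y hY _ hj))

theorem isHereditaryTorPair_torLeft1_torRight1 {𝒮 : Set (ModuleCat.{0} R)}
    (h : ∀ X ∈ 𝒮, ∀ M ∈ torRight1 R 𝒮, ∀ j, 0 < j → torV R X M j) :
    IsHereditaryTorPair R (torLeft1 R (torRight1 R 𝒮)) (torRight1 R 𝒮) :=
  ⟨isTorPair_torLeft1_torRight1 𝒮, fun X hX M hM =>
    mem_torShift_torLeft1_torRight1_iff.2 (fun Y hY => h Y hY M hM) X hX⟩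

end TorPair

section KosCoker

open TensorProduct

theorem exact_iff_forall_exists {R : Type*} [CommRing R] {B C D : Type*} [AddCommGroup B]
    [Module R B] [AddCommGroup C] [Module R C] [AddCommGroup D] [Module R D] {e : B →ₗ[R] C}
    {s : B →ₗ[R] C} {d : C →ₗ[R] D} (hs : Function.Surjective s) (hde : d ∘ₗ e = 0) :
    Function.Exact e d ↔ ∀ b, d (s b) = 0 → ∃ b', e b' = s b := by
  refine ⟨fun h b => (h (s b)).1, fun h c => ⟨fun hc => ?_, ?_⟩⟩
  · obtain ⟨b, rfl⟩ := hs c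
    exact h b hc
  · rintro ⟨b, rfl⟩
    exact LinearMap.congr_fun hde b

variable {A : Type} [CommRing A] {ℓ : ℕ} (x : Fin ℓ → A)

/-- Restriction of a total Koszul cochain to its component of degree `k`. -/
def kosRestrict (A : Type) [CommRing A] (ℓ k : ℕ) : (Finset (Fin ℓ) → A) →ₗ[A] KosTerm A ℓ k :=
  LinearMap.funLeft A A Subtype.val

theorem kosRestrict_surjective (k : ℕ) : Function.Surjective (kosRestrict A ℓ k) :=
  LinearMap.funLeft_surjective_of_injective A A _ Subtype.val_injective

theorem kosD_comp_kosRestrict (k : ℕ) :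
    kosD A x k ∘ₗ kosRestrict A ℓ k = kosRestrict A ℓ (k + 1) ∘ₗ koszulDiff x A := by
  refine LinearMap.ext fun f => funext fun T => ?_
  exact Finset.sum_attach T.1 fun t => (koszulSign A t T.1 * x t) • f (T.1.erase t)

theorem kosD_comp_kosRestrict_comp_koszulDiff (k : ℕ) :
    kosD A x k ∘ₗ kosRestrict A ℓ k ∘ₗ koszulDiff x A = 0 := by
  rw [← LinearMap.comp_assoc, kosD_comp_kosRestrict]
  exact LinearMap.ext fun f => congrArg (kosRestrict A ℓ (k + 1)) (koszulDiff_koszulDiff x f)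

theorem kosD_comp_kosD (k : ℕ) : kosD A x (k + 1) ∘ₗ kosD A x k = 0 := by
  refine (LinearMap.cancel_right (kosRestrict_surjective k)).1 ?_
  rw [LinearMap.comp_assoc, kosD_comp_kosRestrict, kosD_comp_kosRestrict_comp_koszulDiff,
    LinearMap.zero_comp]

/-- The canonical projection onto `S_k(x; A)`, which in degree `0` identifies the cochains on the
one-element set `{∅}` with `A`. -/
def kosCokerMk : (k : ℕ) → KosTerm A ℓ k →ₗ[A] KosCoker A x k
  | 0 => (LinearMap.proj ⟨∅, rfl⟩ : KosTerm A ℓ 0 →ₗ[A] A)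
  | m + 1 => (LinearMap.range (kosD A x m)).mkQ

theorem kosCokerMk_surjective : (k : ℕ) → Function.Surjective (kosCokerMk x k)
  | 0 => fun a => ⟨fun _ => a, rfl⟩
  | m + 1 => (LinearMap.range (kosD A x m)).mkQ_surjective

theorem exact_kosD_kosCokerMk (k : ℕ) :
    Function.Exact (kosD A x k) (kosCokerMk x (k + 1)) :=
  LinearMap.exact_map_mkQ_range (kosD A x k)

theorem exact_koszulDiff_kosCokerMk (k : ℕ) :
    Function.Exact (kosRestrict A ℓ k ∘ₗ koszulDiff x A) (kosCokerMk x k) := by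
  cases k with
  | zero =>
    have hzero : kosRestrict A ℓ 0 ∘ₗ koszulDiff x A = 0 :=
      LinearMap.ext fun f => funext fun ⟨T, hT⟩ => by
        obtain rfl := Finset.card_eq_zero.1 hT
        exact koszulDiff_empty x f
    rw [hzero, LinearMap.exact_zero_iff_injective]
    refine fun f g hfg => funext fun ⟨T, hT⟩ => ?_
    obtain rfl := Finset.card_eq_zero.1 hT
    exact hfg
  | succ k =>
    rw [← kosD_comp_kosRestrict, (kosRestrict_surjective k).comp_exact_iff_exact]
    exact exact_kosD_kosCokerMk x k

/-- The map `S_k(x; A) → K^{k+1}` induced by the `k`-th Koszul differential. -/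
def kosCokerDiff : (k : ℕ) → KosCoker A x k →ₗ[A] KosTerm A ℓ (k + 1)
  | 0 => (kosD A x 0 ∘ₗ LinearMap.pi fun _ => LinearMap.id : A →ₗ[A] KosTerm A ℓ 1)
  | m + 1 => (LinearMap.range (kosD A x m)).liftQ (kosD A x (m + 1))
      (LinearMap.range_le_ker_iff.2 (kosD_comp_kosD x m))

theorem kosCokerDiff_comp_kosCokerMk (k : ℕ) : kosCokerDiff x k ∘ₗ kosCokerMk x k = kosD A x k := by
  cases k with
  | zero =>
    refine LinearMap.ext fun f => congrArg (kosD A x 0) (funext fun ⟨T, hT⟩ => ?_)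
    obtain rfl := Finset.card_eq_zero.1 hT
    rfl
  | succ k => exact Submodule.liftQ_mkQ _ _ _

theorem koszulExact_self_iff (k : ℕ) :
    KoszulExact x A k ↔ Function.Exact (kosRestrict A ℓ k ∘ₗ koszulDiff x A) (kosD A x k) := by
  rw [exact_iff_forall_exists (kosRestrict_surjective k)
    (kosD_comp_kosRestrict_comp_koszulDiff x k)]
  refine forall_congr' fun f => ?_
  rw [← LinearMap.comp_apply, kosD_comp_kosRestrict]
  simp only [funext_iff, Subtype.forall]
  rfl

theorem kosCokerDiff_injective {k : ℕ} (h : KoszulExact x A k) :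
    Function.Injective (kosCokerDiff x k) := by
  rwa [koszulExact_self_iff, ← kosCokerDiff_comp_kosCokerMk,
    exact_comp_iff_injective (exact_koszulDiff_kosCokerMk x k) (kosCokerMk_surjective x k)] at h

theorem exact_kosCokerDiff_kosCokerMk (k : ℕ) :
    Function.Exact (kosCokerDiff x k) (kosCokerMk x (k + 1)) := by
  rw [← (kosCokerMk_surjective x k).comp_exact_iff_exact, kosCokerDiff_comp_kosCokerMk]
  exact exact_kosD_kosCokerMk x k

section Tensor

variable (R : Type) [CommRing R] [Algebra R A] {M : Type} [AddCommGroup M] [Module R M]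

instance isScalarTower_kosCoker (k : ℕ) : IsScalarTower R A (KosCoker A x k) where
  smul_assoc r a z := by rw [Algebra.smul_def, mul_smul]; rfl

theorem piLeft_rTensor_koszulDiff (w : (Finset (Fin ℓ) → A) ⊗[R] M) :
    piLeft R M (fun _ => A) (((koszulDiff x A).restrictScalars R).rTensor M w) =
      koszulDiff x (A ⊗[R] M) (piLeft R M (fun _ => A) w) := by
  induction w with
  | zero => simp only [map_zero]
  | add w w' hw hw' => simp only [map_add, hw, hw']
  | tmul f m =>
    let tmulRight : A →ₗ[A] A ⊗[R] M := LinearMap.toSpanSingleton A _ (1 ⊗ₜ m)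
    have htmul (f : Finset (Fin ℓ) → A) : piLeft R M (fun _ => A) (f ⊗ₜ m) = tmulRight ∘ f :=
      funext fun S => by simp [tmulRight, TensorProduct.smul_tmul']
    rw [LinearMap.rTensor_tmul, htmul, htmul]
    exact funext fun T => (koszulDiff_comp x tmulRight f T).symm

theorem rTensor_kosRestrict_eq_iff (k : ℕ) (w w' : (Finset (Fin ℓ) → A) ⊗[R] M) :
    ((kosRestrict A ℓ k).restrictScalars R).rTensor M w =
      ((kosRestrict A ℓ k).restrictScalars R).rTensor M w' ↔
    ∀ T, T.card = k → piLeft R M (fun _ => A) w T = piLeft R M (fun _ => A) w' T := by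
  have hres (T : {s : Finset (Fin ℓ) // s.card = k}) (w : (Finset (Fin ℓ) → A) ⊗[R] M) :
      piLeft R M (fun _ => A) (((kosRestrict A ℓ k).restrictScalars R).rTensor M w) T =
        piLeft R M (fun _ => A) w T.1 := by
    induction w with
    | zero => simp
    | add w w' hw hw' => simp only [map_add, Pi.add_apply, hw, hw']
    | tmul f m => simp [kosRestrict]
  rw [← (piLeft R M fun _ => A).injective.eq_iff, funext_iff, Subtype.forall]
  simp only [hres]

theorem koszulExact_tensorProduct_iff (k : ℕ) :
    KoszulExact x (A ⊗[R] M) k ↔ Function.Exact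
      (((kosRestrict A ℓ k ∘ₗ koszulDiff x A).restrictScalars R).rTensor M)
      (((kosD A x k).restrictScalars R).rTensor M) := by
  have hcomp : ((kosD A x k).restrictScalars R).rTensor M ∘ₗ
      ((kosRestrict A ℓ k ∘ₗ koszulDiff x A).restrictScalars R).rTensor M = 0 := by
    rw [← LinearMap.rTensor_comp, ← LinearMap.restrictScalars_comp,
      kosD_comp_kosRestrict_comp_koszulDiff, LinearMap.restrictScalars_zero,
      LinearMap.rTensor_zero]
  rw [exact_iff_forall_exists (s := ((kosRestrict A ℓ k).restrictScalars R).rTensor M)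
    (LinearMap.rTensor_surjective M (kosRestrict_surjective k)) hcomp, KoszulExact,
    (piLeft R M fun _ => A).surjective.forall]
  refine forall_congr' fun w => ?_
  rw [← LinearMap.comp_apply, ← LinearMap.rTensor_comp, ← LinearMap.restrictScalars_comp,
    kosD_comp_kosRestrict, ← map_zero (((kosRestrict A ℓ (k + 1)).restrictScalars R).rTensor M)]
  simp only [LinearMap.restrictScalars_comp, LinearMap.rTensor_comp, LinearMap.comp_apply,
    rTensor_kosRestrict_eq_iff, piLeft_rTensor_koszulDiff,
    (piLeft R M fun _ => A).surjective.exists]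
  simp only [map_zero, Pi.zero_apply]

theorem rTensor_kosCokerDiff_injective_iff (k : ℕ) :
    Function.Injective (((kosCokerDiff x k).restrictScalars R).rTensor M) ↔
      KoszulExact x (A ⊗[R] M) k := by
  rw [koszulExact_tensorProduct_iff, ← kosCokerDiff_comp_kosCokerMk,
    LinearMap.restrictScalars_comp (kosCokerDiff x k), LinearMap.rTensor_comp]
  have hmk : Function.Surjective ((kosCokerMk x k).restrictScalars R) := kosCokerMk_surjective x k
  have hexact : Function.Exact ((kosRestrict A ℓ k ∘ₗ koszulDiff x A).restrictScalars R)
      ((kosCokerMk x k).restrictScalars R) := exact_koszulDiff_kosCokerMk x k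
  rw [exact_comp_iff_injective (rTensor_exact M hexact hmk) (LinearMap.rTensor_surjective M hmk)]

end Tensor

section Tor

variable {R : Type} [CommRing R] [Algebra R A] [Module.Flat R A]

instance flat_kosTerm (k : ℕ) : Module.Flat R (KosTerm A ℓ k) :=
  Module.Flat.trans R A (KosTerm A ℓ k)

instance flat_kosCoker_zero : Module.Flat R (KosCoker A x 0) :=
  have : Module.Flat A (KosCoker A x 0) := inferInstanceAs (Module.Flat A A)
  Module.Flat.trans R A (KosCoker A x 0)

variable {x} {k : ℕ}

theorem torV_kosCoker_succ_add_two_iff (h : KoszulExact x A k) (M : ModuleCat.{0} R) (j : ℕ) :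
    torV R (ModuleCat.of R (KosCoker A x (k + 1))) M (j + 2) ↔
      torV R (ModuleCat.of R (KosCoker A x k)) M (j + 1) :=
  torV_add_two_iff (F := .of R (KosTerm A ℓ (k + 1)))
    (i := (kosCokerDiff x k).restrictScalars R) (p := (kosCokerMk x (k + 1)).restrictScalars R)
    (kosCokerDiff_injective x h) (exact_kosCokerDiff_kosCokerMk x k)
    (kosCokerMk_surjective x (k + 1)) M j

theorem torV_kosCoker_succ_one_iff (h : KoszulExact x A k) (M : ModuleCat.{0} R) :
    torV R (ModuleCat.of R (KosCoker A x (k + 1))) M 1 ↔ KoszulExact x (A ⊗[R] M) k := by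
  rw [← rTensor_kosCokerDiff_injective_iff]
  exact torV_one_iff_rTensor (X := .of R (KosCoker A x (k + 1))) (X' := .of R (KosCoker A x k))
    (F := .of R (KosTerm A ℓ (k + 1)))
    (i := (kosCokerDiff x k).restrictScalars R) (p := (kosCokerMk x (k + 1)).restrictScalars R)
    (kosCokerDiff_injective x h) (exact_kosCokerDiff_kosCokerMk x k)
    (kosCokerMk_surjective x (k + 1)) M

theorem torV_kosCoker_of_lt (hA : ∀ j < k, KoszulExact x A j) (M : ModuleCat.{0} R) {j : ℕ}
    (hj : k < j) : torV R (ModuleCat.of R (KosCoker A x k)) M j := by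
  induction k generalizing j with
  | zero =>
    obtain ⟨j, rfl⟩ := Nat.exists_eq_succ_of_ne_zero hj.ne'
    exact torV_of_flat _ M j
  | succ k ih =>
    obtain ⟨j, rfl⟩ := Nat.exists_eq_add_of_le' (show 2 ≤ j by lia)
    rw [torV_kosCoker_succ_add_two_iff (hA k k.lt_succ_self)]
    exact ih (fun i hi => hA i (by lia)) (by lia)

theorem torV_kosCoker_iff {a b : ℕ} (hA : ∀ j < a + b + 1, KoszulExact x A j)
    (M : ModuleCat.{0} R) :
    torV R (ModuleCat.of R (KosCoker A x (a + b + 1))) M (a + 1) ↔ KoszulExact x (A ⊗[R] M) b := by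
  induction a with
  | zero =>
    rw [zero_add] at hA ⊢
    exact torV_kosCoker_succ_one_iff (hA b b.lt_succ_self) M
  | succ a ih =>
    rw [add_right_comm a 1 b] at hA ⊢
    rw [torV_kosCoker_succ_add_two_iff (hA _ (Nat.lt_succ_self _))]
    exact ih fun j hj => hA j (by lia)

end Tor

end KosCoker

section Localization

variable {R : Type} [CommRing R]

theorem span_range_snoc_zero {A : Type*} [CommRing A] {ℓ : ℕ} (x : Fin ℓ → A) :
    Ideal.span (Set.range (Fin.snoc x 0 : Fin (ℓ + 1) → A)) = Ideal.span (Set.range x) := by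
  rw [Fin.range_snoc, Ideal.span_insert_zero]

variable {p : PrimeSpectrum R}

section Generators

variable {ℓ : ℕ} {x : Fin ℓ → Localization.AtPrime p.asIdeal} {k : ℕ} (hx :
    Ideal.span (Set.range x) = Ideal.map (algebraMap R (Localization.AtPrime p.asIdeal)) p.asIdeal)
include hx

theorem natCast_le_depthAt_iff {M : Type} [AddCommGroup M] [Module R M] {n : ℕ} :
    (n : ℕ∞) ≤ depthAt R p M ↔
      ∀ j < n, KoszulExact x (LocalizedModule p.asIdeal.primeCompl M) j :=
  natCast_le_rdepth_iff_koszulExact (hx.trans Localization.AtPrime.map_eq_maximalIdeal)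

theorem natCast_le_ringDepthAt_iff {n : ℕ} :
    (n : ℕ∞) ≤ ringDepthAt R p ↔ ∀ j < n, KoszulExact x (Localization.AtPrime p.asIdeal) j :=
  natCast_le_rdepth_iff_koszulExact (hx.trans Localization.AtPrime.map_eq_maximalIdeal)

theorem torV_kosCoker_atPrime_of_lt (hk : (k : ℕ∞) ≤ ringDepthAt R p) (M : ModuleCat.{0} R)
    {j : ℕ} (hj : k < j) :
    torV R (ModuleCat.of R (KosCoker (Localization.AtPrime p.asIdeal) x k)) M j :=
  have : Module.Flat R (Localization.AtPrime p.asIdeal) :=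
    IsLocalization.flat _ p.asIdeal.primeCompl
  torV_kosCoker_of_lt ((natCast_le_ringDepthAt_iff hx).1 hk) M hj

theorem torV_kosCoker_atPrime_iff {a b : ℕ} (hk : ((a + b + 1 : ℕ) : ℕ∞) ≤ ringDepthAt R p)
    (M : ModuleCat.{0} R) :
    torV R (ModuleCat.of R (KosCoker (Localization.AtPrime p.asIdeal) x (a + b + 1))) M (a + 1) ↔
      KoszulExact x (LocalizedModule p.asIdeal.primeCompl M) b := by
  have : Module.Flat R (Localization.AtPrime p.asIdeal) :=
    IsLocalization.flat _ p.asIdeal.primeCompl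
  rw [torV_kosCoker_iff ((natCast_le_ringDepthAt_iff hx).1 hk),
    koszulExact_congr (LocalizedModule.equivTensorProduct p.asIdeal.primeCompl M)]

theorem forall_torV_kosCoker_atPrime_iff (hk : (k : ℕ∞) ≤ ringDepthAt R p) {M : ModuleCat.{0} R}
    {i : ℕ} :
    (∀ j, i < j →
        torV R (ModuleCat.of R (KosCoker (Localization.AtPrime p.asIdeal) x k)) M j) ↔
      ((k - i : ℕ) : ℕ∞) ≤ depthAt R p M := by
  rw [natCast_le_depthAt_iff hx]
  constructor
  · intro h b hb
    obtain ⟨a, rfl⟩ : ∃ a, k = a + b + 1 := ⟨k - b - 1, by lia⟩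
    exact (torV_kosCoker_atPrime_iff hx hk M).1 (h (a + 1) (by lia))
  · intro h j hj
    rcases lt_or_ge k j with hkj | hjk
    · exact torV_kosCoker_atPrime_of_lt hx hk M hkj
    · obtain ⟨⟨a, rfl⟩, b, rfl⟩ : (∃ a, j = a + 1) ∧ ∃ b, k = j - 1 + b + 1 :=
        ⟨⟨j - 1, by lia⟩, k - j, by lia⟩
      exact (torV_kosCoker_atPrime_iff hx hk M).2 (h b (by lia))

end Generators

-- Appending a zero to a generating sequence produces new generating sequences, and exactness in
-- the top degree for all of them forces exactness in every lower degree.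
theorem natCast_le_depthAt_of_forall_torV_one {k : ℕ}
    (hfg : (IsLocalRing.maximalIdeal (Localization.AtPrime p.asIdeal)).FG)
    (hk : (k : ℕ∞) ≤ ringDepthAt R p) {M : ModuleCat.{0} R}
    (h : ∀ (ℓ : ℕ) (x : Fin ℓ → Localization.AtPrime p.asIdeal),
      Ideal.span (Set.range x) =
        Ideal.map (algebraMap R (Localization.AtPrime p.asIdeal)) p.asIdeal →
      torV R (ModuleCat.of R (KosCoker (Localization.AtPrime p.asIdeal) x k)) M 1) :
    (k : ℕ∞) ≤ depthAt R p M := by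
  rw [← Localization.AtPrime.map_eq_maximalIdeal] at hfg
  obtain ⟨ℓ, x, hx⟩ := Submodule.fg_iff_exists_fin_generating_family.1 hfg
  rw [natCast_le_depthAt_iff hx]
  intro j hj
  obtain ⟨k, rfl⟩ := Nat.exists_eq_add_of_le' (Nat.one_le_of_lt hj)
  induction Nat.le_of_lt_succ hj using Nat.decreasingInduction generalizing ℓ x with
  | self =>
    have hk' : ((0 + k + 1 : ℕ) : ℕ∞) ≤ ringDepthAt R p := by rwa [zero_add]
    refine (torV_kosCoker_atPrime_iff hx hk' M).1 ?_
    rw [zero_add]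
    exact h ℓ x hx
  | of_succ j hjk ih =>
    exact (ih (ℓ + 1) (Fin.snoc x 0) ((span_range_snoc_zero x).trans hx) (by lia)).of_snoc_zero

end Localization

section ResidueField

theorem one_mem_smul_top_of_isUnit {A E : Type*} [CommRing A] [AddCommGroup E] [Module A E]
    {I : Ideal A} {a : A} (ha : a ∈ I) (h : IsUnit (algebraMap A (Module.End A E) a)) :
    (1 : Module.End A E) ∈ I • (⊤ : Submodule A (Module.End A E)) := by
  obtain ⟨e, he⟩ := h.exists_right_inv
  rw [← he, ← Algebra.smul_def]
  exact Submodule.smul_mem_smul ha Submodule.mem_top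

theorem one_mem_smul_top_localizedModule {R E : Type*} [CommRing R] [AddCommGroup E] [Module R E]
    {I : Ideal R} (h : (1 : Module.End R E) ∈ I • (⊤ : Submodule R (Module.End R E)))
    (S : Submonoid R) :
    (1 : Module.End (Localization S) (LocalizedModule S E)) ∈
      I.map (algebraMap R (Localization S)) •
        (⊤ : Submodule (Localization S) (Module.End (Localization S) (LocalizedModule S E))) := by
  suffices hmap : ∀ e ∈ I • (⊤ : Submodule R (Module.End R E)), LocalizedModule.map S e ∈
      I.map (algebraMap R (Localization S)) • (⊤ : Submodule (Localization S) _) by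
    have h1 := hmap 1 h
    rwa [Module.End.one_eq_id, LocalizedModule.map_id] at h1
  intro e he
  induction he using Submodule.smul_induction_on' with
  | smul r hr e _ =>
    rw [map_smul, ← algebraMap_smul (Localization S) r]
    exact Submodule.smul_mem_smul (Ideal.mem_map_of_mem _ hr) Submodule.mem_top
  | add e e' _ _ ihe ihe' =>
    rw [map_add]
    exact Submodule.add_mem _ ihe ihe'

theorem natCast_le_rdepth_of_one_mem_smul_top {A E : Type} [CommRing A] [IsLocalRing A]
    [AddCommGroup E] [Module A E]
    (h : (1 : Module.End A E) ∈
      IsLocalRing.maximalIdeal A • (⊤ : Submodule A (Module.End A E))) (n : ℕ) :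
    (n : ℕ∞) ≤ rdepth A E :=
  natCast_le_rdepth_iff.2 fun j _ => extV_of_one_mem_smul_top (Y := ModuleCat.of A E)
    smul_quotient_eq_zero h j

variable {R : Type} [CommRing R] {p q : PrimeSpectrum R}

theorem smul_resField_eq_zero {r : R} (hr : r ∈ p.asIdeal) (z : resField R p) : r • z = 0 := by
  induction z using LocalizedModule.induction_on with
  | h m s => rw [LocalizedModule.smul'_mk, smul_quotient_eq_zero r hr, LocalizedModule.zero_mk]

theorem one_mem_maximalIdeal_smul_top_resField (hpq : p ≠ q) :
    (1 : Module.End (Localization.AtPrime q.asIdeal)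
      (LocalizedModule q.asIdeal.primeCompl (resField R p))) ∈
      IsLocalRing.maximalIdeal (Localization.AtPrime q.asIdeal) •
        (⊤ : Submodule (Localization.AtPrime q.asIdeal) _) := by
  by_cases hqp : q.asIdeal ≤ p.asIdeal
  · obtain ⟨r, hrp, hrq⟩ := Set.not_subset.1 fun h => hpq (PrimeSpectrum.ext (le_antisymm h hqp))
    have : Subsingleton (LocalizedModule q.asIdeal.primeCompl (resField R p)) :=
      LocalizedModule.subsingleton_iff.2 fun z => ⟨r, hrq, smul_resField_eq_zero hrp z⟩
    rw [Subsingleton.elim (1 : Module.End _ _) 0]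
    exact Submodule.zero_mem _
  · obtain ⟨r, hrq, hrp⟩ := Set.not_subset.1 hqp
    rw [← Localization.AtPrime.map_eq_maximalIdeal]
    exact one_mem_smul_top_localizedModule (one_mem_smul_top_of_isUnit hrq
      (IsLocalizedModule.map_units
        (LocalizedModule.mkLinearMap p.asIdeal.primeCompl (R ⧸ p.asIdeal))
        (⟨r, hrp⟩ : p.asIdeal.primeCompl))) _

theorem mkLinearMap_mkLinearMap_one_ne_zero :
    LocalizedModule.mkLinearMap p.asIdeal.primeCompl (resField R p)
      (LocalizedModule.mkLinearMap p.asIdeal.primeCompl (R ⧸ p.asIdeal) 1) ≠ 0 := by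
  intro h
  obtain ⟨c, hc⟩ := (IsLocalizedModule.eq_zero_iff p.asIdeal.primeCompl _).1 h
  rw [Submonoid.smul_def, ← map_smul] at hc
  obtain ⟨d, hd⟩ := (IsLocalizedModule.eq_zero_iff p.asIdeal.primeCompl _).1 hc
  rw [Submonoid.smul_def, smul_smul, Algebra.smul_def, mul_one] at hd
  exact (d * c).2 (Ideal.Quotient.eq_zero_iff_mem.1 hd)

theorem not_one_le_depthAt_resField_self : ¬ ((1 : ℕ) : ℕ∞) ≤ depthAt R p (resField R p) := by
  intro h
  refine mkLinearMap_mkLinearMap_one_ne_zero (p := p)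
    (extV_quotient_zero_iff.1 (natCast_le_rdepth_iff.1 h 0 one_pos) _ ?_)
  set m := LocalizedModule.mkLinearMap p.asIdeal.primeCompl (R ⧸ p.asIdeal) 1
  change IsLocalRing.maximalIdeal _ ≤ LinearMap.ker (LinearMap.toSpanSingleton
    (Localization.AtPrime p.asIdeal) _ (LocalizedModule.mkLinearMap p.asIdeal.primeCompl _ m))
  rw [← Localization.AtPrime.map_eq_maximalIdeal, Ideal.map_le_iff_le_comap]
  intro r hr
  rw [Ideal.mem_comap, LinearMap.mem_ker, LinearMap.toSpanSingleton_apply, algebraMap_smul,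
    ← map_smul, smul_resField_eq_zero hr, map_zero]

theorem natCast_le_depthAt_resField_iff {n : ℕ} :
    (n : ℕ∞) ≤ depthAt R q (resField R p) ↔ p = q → n = 0 := by
  by_cases hpq : p = q
  · subst hpq
    refine ⟨fun h _ => by_contra fun hn => not_one_le_depthAt_resField_self (p := p) ?_,
      fun h => ?_⟩
    · exact (Nat.cast_le.2 (Nat.one_le_iff_ne_zero.2 hn)).trans h
    · simp only [h rfl, Nat.cast_zero, zero_le]
  · have hone := one_mem_maximalIdeal_smul_top_resField hpq
    exact iff_of_true (natCast_le_rdepth_of_one_mem_smul_top (A := Localization.AtPrime q.asIdeal)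
      (E := LocalizedModule q.asIdeal.primeCompl (resField R p)) hone n) fun h => absurd h hpq

end ResidueField

section SphiSet

variable {R : Type} [CommRing R] {φ : PrimeSpectrum R → ℕ}

theorem flatDimLE_of_mem_sphiSet (hφ : ∀ p, (φ p : ℕ∞) ≤ ringDepthAt R p) {X : ModuleCat.{0} R}
    (hX : X ∈ SphiSet R φ) : ∃ n, flatDimLE R X n := by
  obtain ⟨p, ℓ, x, hx, ⟨e⟩⟩ := hX
  exact ⟨φ p, fun M j hj => (torV_congr e M j).2 (torV_kosCoker_atPrime_of_lt hx (hφ p) M hj)⟩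

variable (hfg : ∀ p : PrimeSpectrum R,
    (IsLocalRing.maximalIdeal (Localization.AtPrime p.asIdeal)).FG)
  (hφ : ∀ p, (φ p : ℕ∞) ≤ ringDepthAt R p)
include hfg hφ

theorem mem_torShift_sphiSet_iff {M : ModuleCat.{0} R} {i : ℕ} :
    M ∈ torShift R (torLeft1 R (torRight1 R (SphiSet R φ))) i ↔
      ∀ p, ((φ p - i : ℕ) : ℕ∞) ≤ depthAt R p M := by
  rw [mem_torShift_torLeft1_torRight1_iff]
  constructor
  · intro h p
    have hp := hfg p
    rw [← Localization.AtPrime.map_eq_maximalIdeal] at hp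
    obtain ⟨ℓ, x, hx⟩ := Submodule.fg_iff_exists_fin_generating_family.1 hp
    exact (forall_torV_kosCoker_atPrime_iff hx (hφ p)).1 fun j hj =>
      h _ ⟨p, ℓ, x, hx, ⟨Iso.refl _⟩⟩ j hj
  · rintro h X ⟨p, ℓ, x, hx, ⟨e⟩⟩ j hj
    exact (torV_congr e M j).2 ((forall_torV_kosCoker_atPrime_iff hx (hφ p)).2 (h p) j hj)

theorem mem_torRight1_sphiSet_iff {M : ModuleCat.{0} R} :
    M ∈ torRight1 R (SphiSet R φ) ↔ ∀ p, (φ p : ℕ∞) ≤ depthAt R p M := by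
  constructor
  · exact fun h p => natCast_le_depthAt_of_forall_torV_one (hfg p) (hφ p) fun ℓ x hx =>
      h _ ⟨p, ℓ, x, hx, ⟨Iso.refl _⟩⟩
  · rintro h X ⟨p, ℓ, x, hx, ⟨e⟩⟩
    exact (torV_congr e M 1).2
      ((forall_torV_kosCoker_atPrime_iff (i := 0) hx (hφ p)).2 (h p) 1 one_pos)

end SphiSet

theorem stmt15_general (R : Type) [CommRing R]
    (hfg : ∀ p : PrimeSpectrum R,
      (IsLocalRing.maximalIdeal (Localization.AtPrime p.asIdeal)).FG)
    (φ : PrimeSpectrum R → ℕ) (hφ : ∀ p, (φ p : ℕ∞) ≤ ringDepthAt R p) :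
    (∀ X ∈ SphiSet R φ, ∃ n : ℕ, flatDimLE R X n) ∧
    IsHereditaryTorPair R (torLeft1 R (torRight1 R (SphiSet R φ))) (torRight1 R (SphiSet R φ)) ∧
    torRight1 R (SphiSet R φ) =
      {M : ModuleCat.{0} R | ∀ p : PrimeSpectrum R, (φ p : ℕ∞) ≤ depthAt R p ↥M} ∧
    (∀ i : ℕ,
      torShift R (torLeft1 R (torRight1 R (SphiSet R φ))) i =
        {M : ModuleCat.{0} R | ∀ p : PrimeSpectrum R,
          ((φ p - i : ℕ) : ℕ∞) ≤ depthAt R p ↥M}) ∧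
    (∀ (p : PrimeSpectrum R) (i : ℕ),
      ModuleCat.of R (resField R p) ∈ torShift R (torLeft1 R (torRight1 R (SphiSet R φ))) i ↔
        φ p ≤ i) := by
  refine ⟨fun X hX => flatDimLE_of_mem_sphiSet hφ hX,
    isHereditaryTorPair_torLeft1_torRight1 fun X hX M hM => ?_,
    Set.ext fun M => mem_torRight1_sphiSet_iff hfg hφ,
    fun i => Set.ext fun M => mem_torShift_sphiSet_iff hfg hφ, fun p i => ?_⟩
  · refine mem_torShift_torLeft1_torRight1_iff.1 ((mem_torShift_sphiSet_iff hfg hφ).2 ?_) X hX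
    exact (mem_torRight1_sphiSet_iff hfg hφ).1 hM
  · rw [mem_torShift_sphiSet_iff hfg hφ]
    simp only [natCast_le_depthAt_resField_iff, forall_eq', Nat.sub_eq_zero_iff_le]

/-- every function `φ : Spec R → ℤ≥0` bounded by the depth function gives a
hereditary Tor-pair generated by the set `𝒮_φ` of modules of finite flat dimension whose
right class is the depth-condition class, with the expected shifted classes. -/
theorem stmt15 (R : Type) [CommRing R] [IsNoetherianRing R]
    (φ : PrimeSpectrum R → ℕ) (hφ : ∀ p, (φ p : ℕ∞) ≤ ringDepthAt R p) :
    (∀ X ∈ SphiSet R φ, ∃ n : ℕ, flatDimLE R X n) ∧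
    IsHereditaryTorPair R (torLeft1 R (torRight1 R (SphiSet R φ))) (torRight1 R (SphiSet R φ)) ∧
    torRight1 R (SphiSet R φ) =
      {M : ModuleCat.{0} R | ∀ p : PrimeSpectrum R, (φ p : ℕ∞) ≤ depthAt R p ↥M} ∧
    (∀ i : ℕ,
      torShift R (torLeft1 R (torRight1 R (SphiSet R φ))) i =
        {M : ModuleCat.{0} R | ∀ p : PrimeSpectrum R,
          ((φ p - i : ℕ) : ℕ∞) ≤ depthAt R p ↥M}) ∧
    (∀ (p : PrimeSpectrum R) (i : ℕ),
      ModuleCat.of R (resField R p) ∈ torShift R (torLeft1 R (torRight1 R (SphiSet R φ))) i ↔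
        φ p ≤ i) :=
  stmt15_general R (fun _ => IsNoetherian.noetherian _) φ hφ
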